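/- arXiv:0908.1885 — 2 statements merged into one kernel-verified Lean document; each statement's English description precedes it below -/
import Mathlib

section
/- Let p ≥ 1 be a real number. Let k̃ : ℝ × [0,∞) → ℝ be a smooth function, 2π-periodic in its first (angular) variable θ, with k̃(θ,τ) > 0 everywhere, satisfying the rescaled curve-shortening equation ∂k̃/∂τ = p·k̃^{1+1/p}·∂²k̃/∂θ² + p·k̃^{2+1/p} − p·k̃ on ℝ × (0,∞), and suppose sup_θ |k̃(θ,τ) − 1| → 0 as τ → ∞. Then for any constant α with 0 < α < 1 there exists A > 0 such that for all τ ≥ A: 4α·∫₀^{2π} (∂k̃/∂θ)² dθ ≤ ∫₀^{2π} (∂²k̃/∂θ²)² dθ. -/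
open Real Filter Set

/-- The wave `x ↦ e^{inx}` on the line. -/
noncomputable def expWave (n : ℤ) (x : ℝ) : ℂ := Complex.exp (n * x * Complex.I)

theorem hasDerivAt_expWave (n : ℤ) (x : ℝ) :
    HasDerivAt (expWave n) (n * Complex.I * expWave n x) x := by
  have h : HasDerivAt (fun y : ℝ => (n : ℂ) * y * Complex.I) (n * Complex.I) x := by
    simpa using ((Complex.ofRealCLM.hasDerivAt (x := x)).const_mul (n : ℂ)).mul_const Complex.I
  exact h.cexp.congr_deriv (mul_comm _ _)

theorem continuous_expWave (n : ℤ) : Continuous (expWave n) := by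
  unfold expWave
  fun_prop

theorem expWave_two_pi (n : ℤ) : expWave n (2 * π) = expWave n 0 := by
  have := Complex.exp_int_mul_two_pi_mul_I n
  simp only [expWave]
  push_cast
  rw [mul_assoc, this]
  simp

theorem norm_expWave (n : ℤ) (x : ℝ) : ‖expWave n x‖ = 1 := by
  have := Complex.norm_exp_ofReal_mul_I (n * x)
  push_cast at this
  exact this

theorem fourierCoeffOn_two_pi (g : ℝ → ℂ) (n : ℤ) :
    fourierCoeffOn two_pi_pos g n =
      (1 / (2 * π)) • ∫ x in (0:ℝ)..(2 * π), expWave (-n) x * g x := by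
  rw [fourierCoeffOn_eq_integral, sub_zero]
  congr 1
  refine intervalIntegral.integral_congr fun x _ => ?_
  have : (π : ℂ) ≠ 0 := by exact_mod_cast pi_ne_zero
  simp only [smul_eq_mul, expWave]
  rw [fourier_coe_apply]
  congr 2
  push_cast
  field_simp

theorem norm_fourierCoeffOn_deriv {f f' : ℝ → ℂ} (hf : ∀ x, HasDerivAt f (f' x) x)
    (hf' : Continuous f') (hper : f (2 * π) = f 0) {n : ℤ} (hn : n ≠ 0) :
    ‖fourierCoeffOn two_pi_pos f' n‖ = |(n : ℝ)| * ‖fourierCoeffOn two_pi_pos f n‖ := by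
  have h := fourierCoeffOn_of_hasDerivAt two_pi_pos hn (fun x _ => hf x)
    (hf'.intervalIntegrable 0 (2 * π))
  have hn' : |(n : ℝ)| ≠ 0 := by simpa using hn
  have hpi := pi_pos
  rw [h, hper]
  simp [abs_of_pos hpi]
  field_simp

theorem hasSum_sq_fourierCoeffOn_ofReal {f : ℝ → ℝ} (hf : Continuous f) :
    HasSum (fun n : ℤ => ‖fourierCoeffOn two_pi_pos (fun x => (f x : ℂ)) n‖ ^ 2)
      ((2 * π)⁻¹ * ∫ x in (0:ℝ)..(2 * π), f x ^ 2) := by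
  have hc : Continuous fun x => (f x : ℂ) := Complex.continuous_ofReal.comp hf
  have hL2 : MeasureTheory.MemLp (fun x => (f x : ℂ)) 2
      (MeasureTheory.volume.restrict (Ioc 0 (2 * π))) := by
    obtain ⟨C, hC⟩ := (isCompact_Icc (a := 0) (b := 2 * π)).exists_bound_of_continuousOn
      hc.continuousOn
    refine .of_bound hc.aestronglyMeasurable C ?_
    filter_upwards [MeasureTheory.ae_restrict_mem measurableSet_Ioc] with x hx
    exact hC x (Ioc_subset_Icc_self hx)
  simpa using hasSum_sq_fourierCoeffOn two_pi_pos hL2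

/-- A Wirtinger-type inequality: a mean-zero periodic function whose first harmonics agree with
those of `h` satisfies the spectral gap estimate with constant `4`, up to the `L²` norm of `h`. -/
theorem four_mul_integral_sq_le_of_first_harmonics {f f' h : ℝ → ℝ}
    (hf : ∀ x, HasDerivAt f (f' x) x) (hf' : Continuous f') (hper : f (2 * π) = f 0)
    (hmean : ∫ x in (0:ℝ)..(2 * π), f x = 0) (hh : Continuous h)
    (hfh : ∀ n : ℤ, n ^ 2 = 1 → ∫ x in (0:ℝ)..(2 * π), expWave n x * f x =
      ∫ x in (0:ℝ)..(2 * π), expWave n x * h x) :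
    4 * ∫ x in (0:ℝ)..(2 * π), f x ^ 2 ≤
      (∫ x in (0:ℝ)..(2 * π), f' x ^ 2) + 3 * ∫ x in (0:ℝ)..(2 * π), h x ^ 2 := by
  have hfc : Continuous f := continuous_iff_continuousAt.2 fun x => (hf x).continuousAt
  have key := hasSum_le (fun n => ?_) ((hasSum_sq_fourierCoeffOn_ofReal hfc).mul_left 4)
    ((hasSum_sq_fourierCoeffOn_ofReal hf').add
      ((hasSum_sq_fourierCoeffOn_ofReal hh).mul_left 3))
  · have hpos : 0 < (2 * π)⁻¹ := by positivity
    refine le_of_mul_le_mul_left ?_ hpos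
    linarith
  rcases eq_or_ne n 0 with rfl | hn
  · have h0 : fourierCoeffOn two_pi_pos (fun x => (f x : ℂ)) 0 = 0 := by
      rw [fourierCoeffOn_two_pi]
      simp [expWave, intervalIntegral.integral_ofReal, hmean]
    rw [h0]
    simp only [norm_zero, ne_eq, OfNat.ofNat_ne_zero, not_false_eq_true, zero_pow, mul_zero]
    positivity
  rw [norm_fourierCoeffOn_deriv (f := fun x => (f x : ℂ)) (fun x => (hf x).ofReal_comp)
    (Complex.continuous_ofReal.comp hf') (by simp [hper]) hn, mul_pow, sq_abs]
  by_cases hn1 : n ^ 2 = 1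
  · have hc : fourierCoeffOn two_pi_pos (fun x => (f x : ℂ)) n =
        fourierCoeffOn two_pi_pos (fun x => (h x : ℂ)) n := by
      rw [fourierCoeffOn_two_pi, fourierCoeffOn_two_pi, hfh (-n) (by simpa using hn1)]
    have hn1' : (n : ℝ) ^ 2 = 1 := by exact_mod_cast hn1
    rw [hc, hn1']
    linarith
  · have h4 : 4 ≤ n ^ 2 := by
      have h1 : n ≠ 1 := by rintro rfl; simp at hn1
      have h2 : n ≠ -1 := by rintro rfl; simp at hn1
      rcases lt_or_gt_of_ne hn with h | h
      · nlinarith [show n ≤ -2 by omega]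
      · nlinarith [show 2 ≤ n by omega]
    have h4' : (4 : ℝ) ≤ (n : ℝ) ^ 2 := by exact_mod_cast h4
    have := mul_le_mul_of_nonneg_right h4'
      (sq_nonneg ‖fourierCoeffOn two_pi_pos (fun x => (f x : ℂ)) n‖)
    linarith [sq_nonneg ‖fourierCoeffOn two_pi_pos (fun x => (h x : ℂ)) n‖]

/-- Differentiation under the integral sign over a compact interval, for an integrand
which is `C¹` in the positive parameter. -/
theorem hasDerivAt_intervalIntegral_of_continuousOn {G G' : ℝ → ℝ → ℂ} {a b t : ℝ} (ht : 0 < t)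
    (hG : ∀ s, 0 < s → Continuous fun x => G x s)
    (hG' : ContinuousOn (fun q : ℝ × ℝ => G' q.1 q.2) (univ ×ˢ Ioi 0))
    (hderiv : ∀ x s, 0 < s → HasDerivAt (G x) (G' x s) s) :
    HasDerivAt (fun s => ∫ x in a..b, G x s) (∫ x in a..b, G' x t) t := by
  have hcpt : IsCompact (uIcc a b ×ˢ Icc (t / 2) (2 * t)) := isCompact_uIcc.prod isCompact_Icc
  obtain ⟨C, hC⟩ := hcpt.exists_bound_of_continuousOn (hG'.mono fun q hq =>
    ⟨mem_univ _, lt_of_lt_of_le (half_pos ht) hq.2.1⟩)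
  have hG'c : Continuous fun x => G' x t := by
    have := hG'.comp_continuous (f := fun x : ℝ => (x, t)) (by fun_prop)
      fun x => ⟨mem_univ _, ht⟩
    exact this
  refine (intervalIntegral.hasDerivAt_integral_of_dominated_loc_of_deriv_le
    (F := fun s x => G x s) (F' := fun s x => G' x s) (bound := fun _ => C)
    (Icc_mem_nhds (by linarith : t / 2 < t) (by linarith : t < 2 * t)) ?_ ?_ ?_ ?_ ?_ ?_).2
  · filter_upwards [Ioi_mem_nhds ht] with s hs
    exact (hG s hs).aestronglyMeasurable
  · exact (hG t ht).intervalIntegrable a b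
  · exact hG'c.aestronglyMeasurable
  · exact Eventually.of_forall fun x hx s hs => hC (x, s) ⟨uIoc_subset_uIcc hx, hs⟩
  · exact intervalIntegrable_const
  · exact Eventually.of_forall fun x _ s hs => hderiv x s (lt_of_lt_of_le (half_pos ht) hs.1)

/-- A bounded solution of `F' = F` on a half-line vanishes. -/
theorem eq_zero_of_hasDerivAt_self_of_bounded {F : ℝ → ℂ} {C : ℝ}
    (hF : ∀ t, 0 < t → HasDerivAt F (F t) t) (hC : ∀ᶠ t in atTop, ‖F t‖ ≤ C) {t : ℝ}
    (ht : 0 < t) : F t = 0 := by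
  have hE : ∀ s, 0 < s → HasDerivAt (fun s => Real.exp (-s) • F s) 0 s := fun s hs =>
    ((hasDerivAt_neg s).exp.smul (hF s hs)).congr_deriv (by simp)
  have hconst : ∀ s, 0 < s → Real.exp (-s) • F s = Real.exp (-t) • F t := fun s hs =>
    isOpen_Ioi.is_const_of_deriv_eq_zero isPreconnected_Ioi
      (fun r hr => (hE r hr).differentiableAt.differentiableWithinAt)
      (fun r hr => (hE r hr).deriv) (mem_Ioi.2 hs) (mem_Ioi.2 ht)
  have hlim : Tendsto (fun s => Real.exp (-s) * C) atTop (nhds 0) := by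
    simpa using (Real.tendsto_exp_neg_atTop_nhds_zero).mul_const C
  have hzero : Tendsto (fun s => Real.exp (-s) • F s) atTop (nhds 0) := by
    refine squeeze_zero_norm' ?_ hlim
    filter_upwards [hC] with s hs
    rw [norm_smul, Real.norm_eq_abs, abs_of_pos (Real.exp_pos _)]
    gcongr
  have hcst : Tendsto (fun s => Real.exp (-s) • F s) atTop (nhds (Real.exp (-t) • F t)) := by
    refine tendsto_const_nhds.congr' ?_
    filter_upwards [eventually_gt_atTop 0] with s hs
    exact (hconst s hs).symm
  have := tendsto_nhds_unique hcst hzero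
  simpa [Real.exp_ne_zero] using this

theorem integral_eq_zero_of_hasDerivAt_of_eq {g g' : ℝ → ℂ} {a b : ℝ}
    (hg : ∀ x, HasDerivAt g (g' x) x) (hg' : Continuous g') (hab : g b = g a) :
    ∫ x in a..b, g' x = 0 := by
  rw [intervalIntegral.integral_eq_sub_of_hasDerivAt (fun x _ => hg x)
    (hg'.intervalIntegrable a b), hab, sub_self]

theorem integral_expWave_mul_deriv_eq_zero {u u' : ℝ → ℝ} (hu : ∀ x, HasDerivAt u (u' x) x)
    (hu' : Continuous u') (hper : u (2 * π) = u 0) {n : ℤ}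
    (h : ∫ x in (0:ℝ)..(2 * π), expWave n x * u x = 0) :
    ∫ x in (0:ℝ)..(2 * π), expWave n x * u' x = 0 := by
  have hw := continuous_expWave n
  have huc : Continuous u := continuous_iff_continuousAt.2 fun x => (hu x).continuousAt
  have hd := integral_eq_zero_of_hasDerivAt_of_eq (a := 0) (b := 2 * π)
    (fun x => (hasDerivAt_expWave n x).mul (hu x).ofReal_comp) (by fun_prop)
    (by simp only [Pi.mul_apply, expWave_two_pi, hper])
  rw [intervalIntegral.integral_add (Continuous.intervalIntegrable (by fun_prop) _ _)
    (Continuous.intervalIntegrable (by fun_prop) _ _)] at hd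
  simpa [mul_assoc, h] using hd

/-- The operator `k ↦ k'' + k` annihilates the first harmonics. -/
theorem integral_expWave_mul_deriv_deriv_add_eq_zero {k k₁ k₂ : ℝ → ℝ}
    (hk : ∀ x, HasDerivAt k (k₁ x) x) (hk₁ : ∀ x, HasDerivAt k₁ (k₂ x) x) (hk₂ : Continuous k₂)
    (hper : k (2 * π) = k 0) (hper₁ : k₁ (2 * π) = k₁ 0) {n : ℤ} (hn : n ^ 2 = 1) :
    ∫ x in (0:ℝ)..(2 * π), expWave n x * ((k₂ x + k x : ℝ) : ℂ) = 0 := by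
  have hw := continuous_expWave n
  have hkc : Continuous k := continuous_iff_continuousAt.2 fun x => (hk x).continuousAt
  have hn' : (n : ℂ) ^ 2 = 1 := by exact_mod_cast hn
  refine integral_eq_zero_of_hasDerivAt_of_eq
    (g := fun x => expWave n x * k₁ x - n * Complex.I * expWave n x * k x)
    (fun x => ?_) (by fun_prop) (by simp only [expWave_two_pi, hper, hper₁])
  refine (((hasDerivAt_expWave n x).mul (hk₁ x).ofReal_comp).sub
    (((hasDerivAt_expWave n x).const_mul (n * Complex.I)).mul (hk x).ofReal_comp)).congr_deriv ?_
  push_cast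
  linear_combination (-(expWave n x * k x) * Complex.I ^ 2) * hn' -
    (expWave n x * k x) * Complex.I_sq

theorem contDiff_slice {K : ℝ → ℝ → ℝ}
    (hK : ContDiffOn ℝ (⊤ : ℕ∞) (fun q : ℝ × ℝ => K q.1 q.2) (univ ×ˢ Ioi 0)) {τ : ℝ}
    (hτ : 0 < τ) : ContDiff ℝ (⊤ : ℕ∞) (fun x => K x τ) :=
  contDiffOn_univ.1 (hK.comp (f := fun x : ℝ => (x, τ)) (by fun_prop) fun _ _ => ⟨mem_univ _, hτ⟩)

theorem hasDerivAt_slice {K : ℝ → ℝ → ℝ}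
    (hK : ContDiffOn ℝ (⊤ : ℕ∞) (fun q : ℝ × ℝ => K q.1 q.2) (univ ×ˢ Ioi 0)) {τ : ℝ}
    (hτ : 0 < τ) (x : ℝ) : HasDerivAt (fun x => K x τ) (deriv (fun x => K x τ) x) x :=
  ((contDiff_slice hK hτ).differentiable (by simp) x).hasDerivAt

theorem contDiff_deriv_slice {K : ℝ → ℝ → ℝ}
    (hK : ContDiffOn ℝ (⊤ : ℕ∞) (fun q : ℝ × ℝ => K q.1 q.2) (univ ×ˢ Ioi 0)) {τ : ℝ}
    (hτ : 0 < τ) : ContDiff ℝ (⊤ : ℕ∞) (deriv fun x => K x τ) :=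
  (contDiff_infty_iff_deriv.1 (contDiff_slice hK hτ)).2

theorem hasDerivAt_deriv_slice {K : ℝ → ℝ → ℝ}
    (hK : ContDiffOn ℝ (⊤ : ℕ∞) (fun q : ℝ × ℝ => K q.1 q.2) (univ ×ˢ Ioi 0)) {τ : ℝ}
    (hτ : 0 < τ) (x : ℝ) :
    HasDerivAt (deriv fun x => K x τ) (deriv (deriv fun x => K x τ) x) x :=
  ((contDiff_deriv_slice hK hτ).differentiable (by simp) x).hasDerivAt

theorem continuous_deriv_deriv_slice {K : ℝ → ℝ → ℝ}
    (hK : ContDiffOn ℝ (⊤ : ℕ∞) (fun q : ℝ × ℝ => K q.1 q.2) (univ ×ˢ Ioi 0)) {τ : ℝ}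
    (hτ : 0 < τ) : Continuous (deriv (deriv fun x => K x τ)) :=
  (contDiff_infty_iff_deriv.1 (contDiff_deriv_slice hK hτ)).2.continuous

theorem periodic_deriv {f : ℝ → ℝ} {c : ℝ} (hf : Function.Periodic f c) :
    Function.Periodic (deriv f) c := fun x => by
  rw [← deriv_comp_add_const f c x, show (fun y => f (y + c)) = f from funext hf]

/-- Along the rescaled flow the first harmonics of `K ^ (-1/p)` solve `F' = F`. -/
theorem hasDerivAt_integral_expWave_mul_rpow {p : ℝ} (hp : 1 ≤ p) {K : ℝ → ℝ → ℝ}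
    (hK : ContDiffOn ℝ (⊤ : ℕ∞) (fun q : ℝ × ℝ => K q.1 q.2) (univ ×ˢ Ioi 0))
    (hper : ∀ τ : ℝ, Function.Periodic (fun θ => K θ τ) (2 * π))
    (hpos : ∀ θ τ : ℝ, 0 < τ → 0 < K θ τ)
    (hpde : ∀ θ : ℝ, ∀ τ ∈ Ioi (0:ℝ),
      deriv (fun s => K θ s) τ =
        p * K θ τ ^ (1 + 1 / p) * deriv (deriv (fun x => K x τ)) θ
          + p * K θ τ ^ (2 + 1 / p) - p * K θ τ)
    {n : ℤ} (hn : n ^ 2 = 1) {τ : ℝ} (hτ : 0 < τ) :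
    HasDerivAt
      (fun t => ∫ θ in (0:ℝ)..(2 * π), expWave n θ * ((K θ t ^ (-(1 / p)) : ℝ) : ℂ))
      (∫ θ in (0:ℝ)..(2 * π), expWave n θ * ((K θ τ ^ (-(1 / p)) : ℝ) : ℂ)) τ := by
  have hp0 : p ≠ 0 := by positivity
  have hw := continuous_expWave n
  have hopen : IsOpen ((univ : Set ℝ) ×ˢ Ioi (0 : ℝ)) := isOpen_univ.prod isOpen_Ioi
  have hKτ : ∀ t, 0 < t → Continuous fun x => K x t := fun t ht =>
    (contDiff_slice hK ht).continuous
  have hpowc : ∀ t, 0 < t → Continuous fun x => K x t ^ (-(1 / p)) := fun t ht =>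
    (hKτ t ht).rpow_const fun x => Or.inl (hpos x t ht).ne'
  have htime : ∀ x t, 0 < t → HasDerivAt (K x)
      (fderiv ℝ (fun q : ℝ × ℝ => K q.1 q.2) (x, t) (0, 1)) t := fun x t ht => by
    have hmem : (x, t) ∈ (univ : Set ℝ) ×ˢ Ioi (0 : ℝ) := ⟨mem_univ _, ht⟩
    have h1 := ((hK.contDiffAt (hopen.mem_nhds hmem)).differentiableAt (by simp)).hasFDerivAt
    exact h1.comp_hasDerivAt t ((hasDerivAt_const t x).prodMk (hasDerivAt_id t))
  have hDc : ContinuousOn (fun q : ℝ × ℝ => deriv (K q.1) q.2) (univ ×ˢ Ioi 0) :=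
    ((hK.continuousOn_fderiv_of_isOpen hopen (by simp)).clm_apply continuousOn_const).congr
      fun q hq => (htime q.1 q.2 hq.2).deriv
  have hderiv : ∀ x t, 0 < t → HasDerivAt (fun t => expWave n x * ((K x t ^ (-(1 / p)) : ℝ) : ℂ))
      (expWave n x * ((deriv (K x) t * -(1 / p) * K x t ^ (-(1 / p) - 1) : ℝ) : ℂ)) t :=
    fun x t ht => (((htime x t ht).differentiableAt.hasDerivAt.rpow_const
      (Or.inl (hpos x t ht).ne')).ofReal_comp).const_mul _
  have hcont : ContinuousOn (fun q : ℝ × ℝ => expWave n q.1 *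
      ((deriv (K q.1) q.2 * -(1 / p) * K q.1 q.2 ^ (-(1 / p) - 1) : ℝ) : ℂ)) (univ ×ˢ Ioi 0) := by
    refine (hw.comp continuous_fst).continuousOn.mul
      (Complex.continuous_ofReal.comp_continuousOn ((hDc.mul continuousOn_const).mul
        (hK.continuousOn.rpow_const fun q hq => Or.inl (hpos q.1 q.2 hq.2).ne')))
  refine (hasDerivAt_intervalIntegral_of_continuousOn hτ (fun t ht => ?_) hcont
    hderiv).congr_deriv ?_
  · have := hpowc t ht
    fun_prop
  have hzero := integral_expWave_mul_deriv_deriv_add_eq_zero (hasDerivAt_slice hK hτ)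
    (hasDerivAt_deriv_slice hK hτ) (continuous_deriv_deriv_slice hK hτ) (by simpa using hper τ 0)
    (by simpa using periodic_deriv (hper τ) 0) hn
  rw [← sub_zero (∫ θ in (0:ℝ)..(2 * π), expWave n θ * ((K θ τ ^ (-(1 / p)) : ℝ) : ℂ)), ← hzero,
    ← intervalIntegral.integral_sub]
  · refine intervalIntegral.integral_congr fun x _ => ?_
    have hx := hpos x τ hτ
    have e1 : K x τ ^ (1 + 1 / p) * K x τ ^ (-(1 / p) - 1) = 1 := by
      rw [← rpow_add hx, show 1 + 1 / p + (-(1 / p) - 1) = 0 by ring, rpow_zero]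
    have e2 : K x τ ^ (2 + 1 / p) * K x τ ^ (-(1 / p) - 1) = K x τ := by
      rw [← rpow_add hx, show 2 + 1 / p + (-(1 / p) - 1) = 1 by ring, rpow_one]
    have e3 : K x τ * K x τ ^ (-(1 / p) - 1) = K x τ ^ (-(1 / p)) := by
      rw [← rpow_one_add' hx.le, show 1 + (-(1 / p) - 1) = -(1 / p) by ring]
      simpa using hp0
    have hreal : deriv (K x) τ * -(1 / p) * K x τ ^ (-(1 / p) - 1) =
        K x τ ^ (-(1 / p)) - (deriv (deriv fun x => K x τ) x + K x τ) := by
      have hpp : p * (1 / p) = 1 := by field_simp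
      rw [show deriv (K x) τ = _ from hpde x τ hτ]
      linear_combination (-(p * (1 / p)) * deriv (deriv fun x => K x τ) x) * e1 -
        (p * (1 / p)) * e2 + (p * (1 / p)) * e3 +
        (K x τ ^ (-(1 / p)) - (deriv (deriv fun x => K x τ) x + K x τ)) * hpp
    simp only [hreal]
    push_cast
    ring
  · have := hpowc τ hτ
    exact Continuous.intervalIntegrable (by fun_prop) _ _
  · have := hKτ τ hτ
    have := continuous_deriv_deriv_slice hK hτ
    exact Continuous.intervalIntegrable (by fun_prop) _ _

/-- The first harmonics of `K ^ (-1/p)` vanish: the curve with curvature profile `K` closes up. -/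
theorem integral_expWave_mul_rpow_eq_zero {p : ℝ} (hp : 1 ≤ p) {K : ℝ → ℝ → ℝ}
    (hK : ContDiffOn ℝ (⊤ : ℕ∞) (fun q : ℝ × ℝ => K q.1 q.2) (univ ×ˢ Ioi 0))
    (hper : ∀ τ : ℝ, Function.Periodic (fun θ => K θ τ) (2 * π))
    (hpos : ∀ θ τ : ℝ, 0 < τ → 0 < K θ τ)
    (hpde : ∀ θ : ℝ, ∀ τ ∈ Ioi (0:ℝ),
      deriv (fun s => K θ s) τ =
        p * K θ τ ^ (1 + 1 / p) * deriv (deriv (fun x => K x τ)) θ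
          + p * K θ τ ^ (2 + 1 / p) - p * K θ τ)
    (hconv : TendstoUniformly (fun τ θ => K θ τ) (fun _ => 1) atTop)
    {n : ℤ} (hn : n ^ 2 = 1) {τ : ℝ} (hτ : 0 < τ) :
    ∫ θ in (0:ℝ)..(2 * π), expWave n θ * ((K θ τ ^ (-(1 / p)) : ℝ) : ℂ) = 0 := by
  refine eq_zero_of_hasDerivAt_self_of_bounded
    (F := fun t => ∫ θ in (0:ℝ)..(2 * π), expWave n θ * ((K θ t ^ (-(1 / p)) : ℝ) : ℂ))
    (C := (1 / 2) ^ (-(1 / p)) * |2 * π - 0|)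
    (fun t ht => hasDerivAt_integral_expWave_mul_rpow hp hK hper hpos hpde hn ht) ?_ hτ
  filter_upwards [Metric.tendstoUniformly_iff.1 hconv (1 / 2) (by norm_num)] with t ht
  refine intervalIntegral.norm_integral_le_of_norm_le_const fun x _ => ?_
  have hx : 1 / 2 ≤ K x t := by
    have := abs_lt.1 (by simpa [Real.dist_eq] using ht x)
    linarith
  rw [norm_mul, norm_expWave, one_mul, Complex.norm_real, Real.norm_eq_abs,
    abs_of_nonneg (rpow_nonneg (by linarith) _)]
  exact rpow_le_rpow_of_nonpos (by norm_num) hx (by simp; linarith)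

/-- Proposition 3.1 (Gage–Hamilton eigenvalue-gap estimate): for any
`0 < α < 1`, for all sufficiently large times,
`4α·∫ (k̃')² ≤ ∫ (k̃'')²`. -/
theorem gage_hamilton_gap_estimate
    (p : ℝ) (hp : 1 ≤ p) (K : ℝ → ℝ → ℝ)
    (hsmooth : ContDiffOn ℝ (⊤ : ℕ∞) (fun q : ℝ × ℝ => K q.1 q.2) (univ ×ˢ Ici 0))
    (hper : ∀ τ : ℝ, Function.Periodic (fun θ => K θ τ) (2 * π))
    (hpos : ∀ θ τ : ℝ, 0 ≤ τ → 0 < K θ τ)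
    (hpde : ∀ θ : ℝ, ∀ τ ∈ Ioi (0:ℝ),
      deriv (fun s => K θ s) τ =
        p * K θ τ ^ (1 + 1 / p) * deriv (deriv (fun x => K x τ)) θ
          + p * K θ τ ^ (2 + 1 / p) - p * K θ τ)
    (hconv : TendstoUniformly (fun τ θ => K θ τ) (fun _ => 1) atTop) :
    ∀ α : ℝ, 0 < α → α < 1 → ∃ A : ℝ, 0 < A ∧ ∀ τ : ℝ, A ≤ τ →
      4 * α * (∫ θ in (0:ℝ)..(2 * π), (deriv (fun x => K x τ) θ) ^ 2) ≤
        ∫ θ in (0:ℝ)..(2 * π), (deriv (deriv (fun x => K x τ)) θ) ^ 2 := by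
  intro α hα0 hα1
  have hp0 : p ≠ 0 := by positivity
  have hK := hsmooth.mono (prod_mono_right Ioi_subset_Ici_self)
  have hpos' : ∀ θ τ : ℝ, 0 < τ → 0 < K θ τ := fun θ τ hτ => hpos θ τ hτ.le
  have hc : ContinuousAt (fun x : ℝ => x ^ (-(1 / p) - 1)) 1 :=
    continuousAt_rpow_const _ _ (Or.inl one_ne_zero)
  obtain ⟨δ, hδ, hδε⟩ := Metric.continuousAt_iff.1 hc (1 - α) (by linarith)
  obtain ⟨A, hA⟩ := eventually_atTop.1 (Metric.tendstoUniformly_iff.1 hconv δ hδ)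
  refine ⟨max A 1, by positivity, fun τ hτ => ?_⟩
  have hτ0 : 0 < τ := lt_of_lt_of_le one_pos ((le_max_right _ _).trans hτ)
  have hw : ∀ x, |1 - K x τ ^ (-(1 / p) - 1)| ≤ 1 - α := fun x => by
    have h1 := hA τ ((le_max_left _ _).trans hτ) x
    rw [dist_comm] at h1
    have h2 := hδε h1
    rw [dist_comm, Real.dist_eq, one_rpow] at h2
    exact h2.le
  have hk := hasDerivAt_slice hK hτ0
  have hk₁ := hasDerivAt_deriv_slice hK hτ0
  have hk₂ := continuous_deriv_deriv_slice hK hτ0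
  have hkc : Continuous fun x => K x τ := (contDiff_slice hK hτ0).continuous
  have hk₁c : Continuous (deriv fun x => K x τ) := (contDiff_deriv_slice hK hτ0).continuous
  have hwc : Continuous fun x => K x τ ^ (-(1 / p) - 1) :=
    hkc.rpow_const fun x => Or.inl (hpos' x τ hτ0).ne'
  have hmean : ∫ x in (0:ℝ)..(2 * π), deriv (fun x => K x τ) x = 0 := by
    rw [intervalIntegral.integral_eq_sub_of_hasDerivAt (fun x _ => hk x)
      (hk₁c.intervalIntegrable _ _), sub_eq_zero]
    simpa using hper τ 0
  have hgap := four_mul_integral_sq_le_of_first_harmonics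
    (h := fun x => deriv (fun x => K x τ) x * (1 - K x τ ^ (-(1 / p) - 1)))
    hk₁ hk₂ (by simpa using periodic_deriv (hper τ) 0) hmean (by fun_prop) fun n hn => ?_
  · have hle : ∫ x in (0:ℝ)..(2 * π),
        (deriv (fun x => K x τ) x * (1 - K x τ ^ (-(1 / p) - 1))) ^ 2 ≤
        ∫ x in (0:ℝ)..(2 * π), (1 - α) ^ 2 * deriv (fun x => K x τ) x ^ 2 := by
      refine intervalIntegral.integral_mono_on two_pi_pos.le
        (Continuous.intervalIntegrable (by fun_prop) _ _)
        (Continuous.intervalIntegrable (by fun_prop) _ _) fun x _ => ?_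
      rw [mul_pow, mul_comm]
      exact mul_le_mul_of_nonneg_right (sq_le_sq' (abs_le.1 (hw x)).1 (abs_le.1 (hw x)).2)
        (sq_nonneg _)
    rw [intervalIntegral.integral_const_mul] at hle
    have hnn : 0 ≤ ∫ x in (0:ℝ)..(2 * π), deriv (fun x => K x τ) x ^ 2 :=
      intervalIntegral.integral_nonneg two_pi_pos.le fun x _ => sq_nonneg _
    have hα : 0 ≤ 4 * (1 - α) - 3 * (1 - α) ^ 2 := by nlinarith
    nlinarith [mul_nonneg hα hnn]
  · have hzero := integral_expWave_mul_deriv_eq_zero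
      (fun x => (hk x).rpow_const (p := -(1 / p)) (Or.inl (hpos' x τ hτ0).ne')) (by fun_prop)
      (by simp only [show K (2 * π) τ = K 0 τ by simpa using hper τ 0])
      (integral_expWave_mul_rpow_eq_zero hp hK hper hpos' hpde hconv hn hτ0)
    have hwave := continuous_expWave n
    rw [← sub_eq_zero, ← intervalIntegral.integral_sub
      (Continuous.intervalIntegrable (by fun_prop) _ _)
      (Continuous.intervalIntegrable (by fun_prop) _ _),
      ← mul_zero (-(p : ℂ)), ← hzero, ← intervalIntegral.integral_const_mul]
    refine intervalIntegral.integral_congr fun x _ => ?_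
    have : (p : ℂ) ≠ 0 := by exact_mod_cast hp0
    push_cast
    field_simp
    ring
end

section
/- Let p ≥ 1 be a real number. Let k̃ : ℝ × [0,∞) → ℝ be a smooth function, 2π-periodic in its first (angular) variable θ, with k̃(θ,τ) > 0 everywhere, satisfying the rescaled curve-shortening equation ∂k̃/∂τ = p·k̃^{1+1/p}·∂²k̃/∂θ² + p·k̃^{2+1/p} − p·k̃ on ℝ × (0,∞), and suppose sup_θ |k̃(θ,τ) − 1| → 0 as τ → ∞. Then for any constant α with 0 < α < 1 there exists a constant C₃ > 0, depending only on p, α and the initial data k̃(·,0), such that for all τ ≥ 0: (∫₀^{2π} (∂k̃/∂θ)² dθ)^{1/2} ≤ C₃·exp(−2αp·τ). -/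
open Real Filter Set

/-- Wirtinger's inequality with constant `4` for mean-zero functions, up to the contribution of
the first Fourier mode. -/
theorem wirtinger_four_sub_first_mode {w w' : ℝ → ℝ} (hw : ∀ x, HasDerivAt w (w' x) x)
    (hw' : Continuous w') (hper : w (2 * π) = w 0) (hmean : ∫ x in (0:ℝ)..(2 * π), w x = 0) :
    4 * (∫ x in (0:ℝ)..(2 * π), w x ^ 2)
      - 3 / π * ((∫ x in (0:ℝ)..(2 * π), w x * cos x) ^ 2
        + (∫ x in (0:ℝ)..(2 * π), w x * sin x) ^ 2)
      ≤ ∫ x in (0:ℝ)..(2 * π), w' x ^ 2 := by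
  have h2 : (0:ℝ) < 2 * π := by positivity
  have hwc : Continuous w := continuous_iff_continuousAt.2 fun x => (hw x).continuousAt
  have parseval : ∀ g : ℝ → ℝ, Continuous g →
      HasSum (fun i => ‖fourierCoeffOn h2 (fun x => (g x : ℂ)) i‖ ^ 2)
        ((2 * π)⁻¹ * ∫ x in (0:ℝ)..(2 * π), g x ^ 2) := by
    intro g hg
    have hL : MeasureTheory.MemLp (fun x => (g x : ℂ)) 2 (MeasureTheory.volume.restrict (Ioc 0 (2 * π))) := by
      obtain ⟨C, hC⟩ := (isCompact_Icc (a := (0:ℝ)) (b := 2 * π)).exists_bound_of_continuousOn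
        hg.continuousOn
      refine MeasureTheory.MemLp.of_bound (Complex.continuous_ofReal.comp hg).aestronglyMeasurable
        C ?_
      refine (MeasureTheory.ae_restrict_iff' measurableSet_Ioc).2 (Eventually.of_forall ?_)
      intro x hx
      simpa using hC x (Ioc_subset_Icc_self hx)
    simpa using hasSum_sq_fourierCoeffOn h2 hL
  have hcoeff : ∀ n : ℤ, ‖fourierCoeffOn h2 (fun x => (w' x : ℂ)) n‖ ^ 2
      = (n:ℝ) ^ 2 * ‖fourierCoeffOn h2 (fun x => (w x : ℂ)) n‖ ^ 2 := by
    intro n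
    rcases eq_or_ne n 0 with rfl | hn
    · have : ∫ x in (0:ℝ)..(2 * π), w' x = 0 := by
        rw [intervalIntegral.integral_eq_sub_of_hasDerivAt (fun x _ => hw x)
          (hw'.intervalIntegrable _ _), hper, sub_self]
      simp [fourierCoeffOn_eq_integral, intervalIntegral.integral_ofReal, this]
    · have := fourierCoeffOn_of_hasDerivAt h2 hn (fun x _ => (hw x).ofReal_comp)
        ((Complex.continuous_ofReal.comp hw').intervalIntegrable _ _)
      rw [this, hper]
      have hn' : (n:ℝ) ≠ 0 := by exact_mod_cast hn
      simp only [sub_self, mul_zero, zero_sub, norm_mul, norm_neg, norm_div, norm_one,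
        Complex.norm_real, Complex.norm_I, Complex.norm_intCast, Complex.ofReal_zero, sub_zero,
        mul_one, Complex.ofReal_mul, Complex.norm_ofNat, norm_eq_abs,
        abs_of_pos pi_pos, Complex.ofReal_ofNat]
      rw [← sq_abs (n:ℝ)]
      have : |(n:ℝ)| ≠ 0 := abs_ne_zero.2 hn'
      field_simp
  have hmode : ∀ n : ℤ, |n| = 1 → ‖fourierCoeffOn h2 (fun x => (w x : ℂ)) n‖ ^ 2
      = (2 * π)⁻¹ ^ 2 * ((∫ x in (0:ℝ)..(2 * π), w x * cos x) ^ 2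
        + (∫ x in (0:ℝ)..(2 * π), w x * sin x) ^ 2) := by
    intro n hn
    rw [fourierCoeffOn_eq_integral]
    have : ∀ x : ℝ, fourier (-n) (x : AddCircle (2 * π - 0)) • (w x : ℂ)
        = ((w x * cos x : ℝ) : ℂ) + ((-n * (w x * sin x) : ℝ) : ℂ) * Complex.I := by
      intro x
      rw [fourier_coe_apply]
      have e : 2 * (π:ℂ) * Complex.I * ((-n : ℤ) : ℂ) * x / ((2 * π - 0 : ℝ) : ℂ)
          = ((-n * x : ℝ) : ℂ) * Complex.I := by
        have : (π : ℂ) ≠ 0 := by exact_mod_cast pi_ne_zero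
        push_cast
        rw [sub_zero]
        field_simp
      rw [e, Complex.exp_mul_I, ← Complex.ofReal_cos, ← Complex.ofReal_sin]
      rcases (abs_eq (by norm_num)).1 hn with rfl | rfl
      · simp; ring
      · simp; ring
    simp_rw [this]
    rw [intervalIntegral.integral_add, intervalIntegral.integral_mul_const,
      intervalIntegral.integral_ofReal, intervalIntegral.integral_ofReal,
      intervalIntegral.integral_const_mul, norm_smul, mul_pow, Complex.sq_norm,
      Complex.normSq_add_mul_I]
    · have : (n:ℝ) ^ 2 = 1 := by
        rw [← sq_abs, ← Int.cast_abs, hn]; simp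
      simp only [sub_zero, one_div, norm_inv, norm_mul, norm_ofNat, norm_eq_abs, abs_of_pos pi_pos]
      rw [mul_pow (-(n:ℝ)), neg_sq, this, one_mul]
    all_goals exact Continuous.intervalIntegrable (by fun_prop) _ _
  have hzero : fourierCoeffOn h2 (fun x => (w x : ℂ)) 0 = 0 := by
    simp [fourierCoeffOn_eq_integral, intervalIntegral.integral_ofReal, hmean]
  set M := (∫ x in (0:ℝ)..(2 * π), w x * cos x) ^ 2
        + (∫ x in (0:ℝ)..(2 * π), w x * sin x) ^ 2 with hM
  have hS := (parseval w' hw').sub ((parseval w hwc).mul_left 4)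
  have hF : HasSum (fun i : ℤ => if i = 1 ∨ i = -1 then -3 * ((2 * π)⁻¹ ^ 2 * M) else 0)
      (-6 * ((2 * π)⁻¹ ^ 2 * M)) := by
    convert hasSum_sum_of_ne_finset_zero (L := SummationFilter.unconditional ℤ) (s := ({1, -1} : Finset ℤ))
      (f := fun i : ℤ => if i = 1 ∨ i = -1 then -3 * ((2 * π)⁻¹ ^ 2 * M) else 0)
      (by intro b hb; simp at hb; simp [hb]) using 1
    simp
    ring
  have := hasSum_le (fun n => ?_) hF hS
  · have h3 := mul_le_mul_of_nonneg_left this h2.le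
    field_simp at h3 ⊢
    linarith
  · rw [hcoeff n]
    split_ifs with h
    · rw [hmode n (by rcases h with rfl | rfl <;> simp)]
      have : (n:ℝ) ^ 2 = 1 := by rcases h with rfl | rfl <;> simp
      rw [this]
      linarith
    · rcases eq_or_ne n 0 with rfl | hn
      · simp [hzero]
      · have : (2:ℤ) ^ 2 ≤ n ^ 2 := by
          rcases (by omega : 2 ≤ n ∨ n ≤ -2) with h' | h' <;> nlinarith
        have h4 : (4:ℝ) ≤ (n:ℝ) ^ 2 := by exact_mod_cast this
        nlinarith [sq_nonneg ‖fourierCoeffOn h2 (fun x => (w x : ℂ)) n‖]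

/-- Integration by parts over a period. -/
theorem integral_mul_deriv_eq_neg_of_periodic {u v u' v' : ℝ → ℝ} {a b : ℝ}
    (hu : ∀ x, HasDerivAt u (u' x) x) (hv : ∀ x, HasDerivAt v (v' x) x)
    (hu' : Continuous u') (hv' : Continuous v') (hub : u b = u a) (hvb : v b = v a) :
    ∫ x in a..b, u x * v' x = -∫ x in a..b, u' x * v x := by
  rw [intervalIntegral.integral_mul_deriv_eq_deriv_mul (fun x _ => hu x) (fun x _ => hv x)
    (hu'.intervalIntegrable _ _) (hv'.intervalIntegrable _ _), hub, hvb]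
  ring

/-- Differentiation under the integral sign for a `C¹` function on an open half plane. -/
theorem hasDerivAt_integral_of_contDiffOn_halfPlane {G : ℝ × ℝ → ℝ} {n : WithTop ℕ∞} (hn : 1 ≤ n)
    (hG : ContDiffOn ℝ n G (univ ×ˢ Ioi 0)) (a b : ℝ) {t : ℝ} (ht : 0 < t) :
    HasDerivAt (fun s => ∫ x in a..b, G (x, s)) (∫ x in a..b, fderiv ℝ G (x, t) (0, 1)) t := by
  have hopen : IsOpen ((univ : Set ℝ) ×ˢ Ioi (0:ℝ)) := isOpen_univ.prod isOpen_Ioi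
  have hmem : ∀ x s : ℝ, 0 < s → (x, s) ∈ (univ : Set ℝ) ×ˢ Ioi (0:ℝ) := fun x s hs =>
    ⟨mem_univ _, hs⟩
  have hG' : ContinuousOn (fun q => fderiv ℝ G q (0, 1)) (univ ×ˢ Ioi 0) :=
    (hG.continuousOn_fderiv_of_isOpen hopen hn).clm_apply continuousOn_const
  have hslice : ∀ {H : ℝ × ℝ → ℝ}, ContinuousOn H (univ ×ˢ Ioi 0) → ∀ s : ℝ, 0 < s →
      Continuous fun x => H (x, s) := by
    intro H hH s hs
    exact hH.comp_continuous (by fun_prop) fun x => hmem x s hs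
  obtain ⟨C, hC⟩ := ((isCompact_uIcc (a := a) (b := b)).prod
    (isCompact_Icc (a := t / 2) (b := 2 * t))).exists_bound_of_continuousOn
    (hG'.mono fun q hq => hmem q.1 q.2 (by have := hq.2.1; linarith))
  refine (intervalIntegral.hasDerivAt_integral_of_dominated_loc_of_deriv_le
    (F := fun s x => G (x, s)) (F' := fun s x => fderiv ℝ G (x, s) (0, 1))
    (bound := fun _ => C) (s := Icc (t / 2) (2 * t)) (Icc_mem_nhds (by linarith) (by linarith))
    ?_ ?_ ?_ ?_ ?_ ?_).2
  · filter_upwards [lt_mem_nhds ht] with s hs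
    exact (hslice hG.continuousOn s hs).aestronglyMeasurable
  · exact (hslice hG.continuousOn t ht).intervalIntegrable _ _
  · exact (hslice hG' t ht).aestronglyMeasurable
  · exact Eventually.of_forall fun x hx s hs => hC (x, s) ⟨uIoc_subset_uIcc hx, hs⟩
  · exact continuous_const.intervalIntegrable _ _
  · refine Eventually.of_forall fun x _ s hs => ?_
    have hs0 : 0 < s := by have := hs.1; linarith
    have hd : HasFDerivAt G (fderiv ℝ G (x, s)) (x, s) :=
      ((hG.contDiffAt (hopen.mem_nhds (hmem x s hs0))).differentiableAt
        (by rintro rfl; simp at hn)).hasFDerivAt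
    exact hd.comp_hasDerivAt s ((hasDerivAt_const s x).prodMk (hasDerivAt_id s))

/-- The Cauchy–Schwarz inequality for interval integrals of continuous functions. -/
theorem sq_intervalIntegral_mul_le {f g : ℝ → ℝ} {a b : ℝ} (hab : a ≤ b) (hf : Continuous f)
    (hg : Continuous g) (hpos : 0 < ∫ x in a..b, g x ^ 2) :
    (∫ x in a..b, f x * g x) ^ 2 ≤ (∫ x in a..b, g x ^ 2) * ∫ x in a..b, f x ^ 2 := by
  set B := ∫ x in a..b, g x ^ 2 with hB
  set c := ∫ x in a..b, f x * g x with hc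
  have h0 : 0 ≤ ∫ x in a..b, (B * f x - c * g x) ^ 2 :=
    intervalIntegral.integral_nonneg hab fun x _ => sq_nonneg _
  have h1 : ∫ x in a..b, (B * f x - c * g x) ^ 2
      = B ^ 2 * (∫ x in a..b, f x ^ 2) - 2 * B * c * c + c ^ 2 * B := by
    have e : ∀ x, (B * f x - c * g x) ^ 2
        = B ^ 2 * f x ^ 2 - 2 * B * c * (f x * g x) + c ^ 2 * g x ^ 2 := fun x => by ring
    simp_rw [e]
    rw [intervalIntegral.integral_add, intervalIntegral.integral_sub,
      intervalIntegral.integral_const_mul, intervalIntegral.integral_const_mul,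
      intervalIntegral.integral_const_mul]
    all_goals exact Continuous.intervalIntegrable (by fun_prop) _ _
  rw [h1] at h0
  have h2 : 0 ≤ B * (B * (∫ x in a..b, f x ^ 2) - c ^ 2) := by linarith
  have := nonneg_of_mul_nonneg_right h2 hpos
  linarith

/-- A function which is orthogonal to `φ` for a weight close to `1` is almost orthogonal to `φ`. -/
theorem sq_integral_mul_le_of_weighted_orthogonal {w m φ : ℝ → ℝ} {ε : ℝ}
    (hw : Continuous w) (hm : Continuous m) (hφ : Continuous φ)
    (hφ2 : ∫ x in (0:ℝ)..(2 * π), φ x ^ 2 = π)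
    (hmε : ∀ x, |m x - 1| ≤ ε) (horth : ∫ x in (0:ℝ)..(2 * π), m x * w x * φ x = 0) :
    (∫ x in (0:ℝ)..(2 * π), w x * φ x) ^ 2 ≤ π * (ε ^ 2 * ∫ x in (0:ℝ)..(2 * π), w x ^ 2) := by
  have h2 : (0:ℝ) ≤ 2 * π := by positivity
  have e : ∫ x in (0:ℝ)..(2 * π), w x * φ x
      = ∫ x in (0:ℝ)..(2 * π), ((1 - m x) * w x) * φ x := by
    have : ∀ x, (1 - m x) * w x * φ x = w x * φ x - m x * w x * φ x := fun x => by ring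
    simp_rw [this]
    rw [intervalIntegral.integral_sub, horth, sub_zero]
    all_goals exact Continuous.intervalIntegrable (by fun_prop) _ _
  rw [e]
  have := sq_intervalIntegral_mul_le (f := fun x => (1 - m x) * w x) (g := φ) h2 (by fun_prop) hφ
    (by rw [hφ2]; exact pi_pos)
  rw [hφ2] at this
  refine this.trans (mul_le_mul_of_nonneg_left ?_ pi_pos.le)
  rw [← intervalIntegral.integral_const_mul]
  refine intervalIntegral.integral_mono_on h2 (Continuous.intervalIntegrable (by fun_prop) _ _)
    (Continuous.intervalIntegrable (by fun_prop) _ _) fun x _ => ?_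
  rw [mul_pow]
  refine mul_le_mul_of_nonneg_right ?_ (sq_nonneg _)
  have := hmε x
  rw [abs_sub_comm] at this
  exact sq_le_sq' (abs_le.1 this).1 (abs_le.1 this).2

/-- If `k` is close to `1` and `k ^ (-1 / p)` has no first Fourier mode, then the flow dissipates
the Dirichlet energy of `k`. -/
theorem dirichlet_dissipation {p ε : ℝ} (hp : 1 ≤ p) (hε0 : 0 ≤ ε) (hε1 : ε ≤ 1)
    {k k₁ k₂ : ℝ → ℝ} (hk : ∀ x, HasDerivAt k (k₁ x) x) (hk₁ : ∀ x, HasDerivAt k₁ (k₂ x) x)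
    (hk₂ : Continuous k₂) (hper : k (2 * π) = k 0) (hper₁ : k₁ (2 * π) = k₁ 0)
    (hpos : ∀ x, 0 < k x) (h₁ : ∀ x, |k x ^ (1 + 1 / p) - 1| ≤ ε)
    (h₂ : ∀ x, |k x ^ (-1 / p - 1) - 1| ≤ ε)
    (hcos : ∫ x in (0:ℝ)..(2 * π), k x ^ (-1 / p) * cos x = 0)
    (hsin : ∫ x in (0:ℝ)..(2 * π), k x ^ (-1 / p) * sin x = 0) :
    -∫ x in (0:ℝ)..(2 * π), k₂ x * (p * k x ^ (1 + 1 / p) * k₂ x + p * k x ^ (2 + 1 / p) - p * k x)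
      ≤ -(p * (2 - 13 * ε)) * ∫ x in (0:ℝ)..(2 * π), k₁ x ^ 2 := by
  have h2 : (0:ℝ) ≤ 2 * π := by positivity
  have hp0 : 0 < p := by linarith
  have hkc : Continuous k := continuous_iff_continuousAt.2 fun x => (hk x).continuousAt
  have hk₁c : Continuous k₁ := continuous_iff_continuousAt.2 fun x => (hk₁ x).continuousAt
  have hpow : ∀ r : ℝ, Continuous fun x => k x ^ r := fun r =>
    hkc.rpow_const fun x => Or.inl (hpos x).ne'
  have hpowd : ∀ r x : ℝ, HasDerivAt (fun x => k x ^ r) (k₁ x * r * k x ^ (r - 1)) x := fun r x =>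
    (hk x).rpow_const (Or.inl (hpos x).ne')
  have hpow₁ := hpow (1 + 1 / p)
  have hpow₂ := hpow (2 + 1 / p)
  have hpow₃ := hpow (-1 / p - 1)
  have hpow₄ := hpow (-1 / p)
  have orth : ∀ φ φ' : ℝ → ℝ, (∀ x, HasDerivAt φ (φ' x) x) → Continuous φ' → φ (2 * π) = φ 0 →
      ∫ x in (0:ℝ)..(2 * π), k x ^ (-1 / p) * φ' x = 0 →
      ∫ x in (0:ℝ)..(2 * π), k x ^ (-1 / p - 1) * k₁ x * φ x = 0 := by
    intro φ φ' hφ hφ' hφper h0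
    rw [integral_mul_deriv_eq_neg_of_periodic (hpowd _) hφ (by fun_prop) hφ' (by rw [hper]) hφper]
      at h0
    have e : ∀ x, k₁ x * (-1 / p) * k x ^ (-1 / p - 1) * φ x
        = (-1 / p) * (k x ^ (-1 / p - 1) * k₁ x * φ x) := fun x => by ring
    simp_rw [e] at h0
    rw [intervalIntegral.integral_const_mul, neg_eq_zero] at h0
    exact (mul_eq_zero.1 h0).resolve_left (by simp [hp0.ne'])
  have o_sin := orth sin cos hasDerivAt_sin continuous_cos (by simp) hcos
  have o_cos := orth (fun x => -cos x) sin (fun x => by simpa using! (hasDerivAt_cos x).neg)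
    continuous_sin (by simp) hsin
  have o_cos' : ∫ x in (0:ℝ)..(2 * π), k x ^ (-1 / p - 1) * k₁ x * cos x = 0 := by
    simpa using o_cos
  have hA := sq_integral_mul_le_of_weighted_orthogonal hk₁c hpow₃ continuous_sin
    (by rw [integral_sin_sq]; simp) h₂ o_sin
  have hB := sq_integral_mul_le_of_weighted_orthogonal hk₁c hpow₃ continuous_cos
    (by rw [integral_cos_sq]; simp) h₂ o_cos'
  have hmean : ∫ x in (0:ℝ)..(2 * π), k₁ x = 0 := by
    rw [intervalIntegral.integral_eq_sub_of_hasDerivAt (fun x _ => hk x)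
      (hk₁c.intervalIntegrable _ _), hper, sub_self]
  have hW := wirtinger_four_sub_first_mode hk₁ hk₂ hper₁ hmean
  have hparts : ∫ x in (0:ℝ)..(2 * π), (k x ^ (2 + 1 / p) - k x) * k₂ x
      = -∫ x in (0:ℝ)..(2 * π), ((2 + 1 / p) * k x ^ (1 + 1 / p) - 1) * k₁ x ^ 2 := by
    have hu : ∀ x, HasDerivAt (fun x => k x ^ (2 + 1 / p) - k x)
        (((2 + 1 / p) * k x ^ (1 + 1 / p) - 1) * k₁ x) x := fun x => by
      refine ((hpowd (2 + 1 / p) x).sub (hk x)).congr_deriv ?_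
      rw [show 2 + 1 / p - 1 = 1 + 1 / p by ring]
      ring
    rw [integral_mul_deriv_eq_neg_of_periodic hu hk₁ (by fun_prop) hk₂ (by rw [hper]) hper₁]
    congr 1
    exact intervalIntegral.integral_congr fun x _ => by ring
  have hsplit : ∫ x in (0:ℝ)..(2 * π),
        k₂ x * (p * k x ^ (1 + 1 / p) * k₂ x + p * k x ^ (2 + 1 / p) - p * k x)
      = p * (∫ x in (0:ℝ)..(2 * π), k x ^ (1 + 1 / p) * k₂ x ^ 2)
        + p * ∫ x in (0:ℝ)..(2 * π), (k x ^ (2 + 1 / p) - k x) * k₂ x := by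
    rw [← intervalIntegral.integral_const_mul, ← intervalIntegral.integral_const_mul,
      ← intervalIntegral.integral_add]
    · exact intervalIntegral.integral_congr fun x _ => by ring
    all_goals exact Continuous.intervalIntegrable (by fun_prop) _ _
  set E := ∫ x in (0:ℝ)..(2 * π), k₁ x ^ 2 with hE
  set I := ∫ x in (0:ℝ)..(2 * π), k₂ x ^ 2 with hI
  have hE0 : 0 ≤ E := intervalIntegral.integral_nonneg h2 fun x _ => sq_nonneg _
  have hI2 : (1 - ε) * I ≤ ∫ x in (0:ℝ)..(2 * π), k x ^ (1 + 1 / p) * k₂ x ^ 2 := by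
    rw [← intervalIntegral.integral_const_mul]
    refine intervalIntegral.integral_mono_on h2 (Continuous.intervalIntegrable (by fun_prop) _ _)
      (Continuous.intervalIntegrable (by fun_prop) _ _) fun x _ => ?_
    exact mul_le_mul_of_nonneg_right (by linarith [(abs_le.1 (h₁ x)).1]) (sq_nonneg _)
  have hE2 : ∫ x in (0:ℝ)..(2 * π), ((2 + 1 / p) * k x ^ (1 + 1 / p) - 1) * k₁ x ^ 2
      ≤ (2 + 3 * ε) * E := by
    rw [← intervalIntegral.integral_const_mul]
    refine intervalIntegral.integral_mono_on h2 (Continuous.intervalIntegrable (by fun_prop) _ _)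
      (Continuous.intervalIntegrable (by fun_prop) _ _) fun x _ => ?_
    refine mul_le_mul_of_nonneg_right ?_ (sq_nonneg _)
    have hp1 : 1 / p ≤ 1 := by rw [div_le_one hp0]; exact hp
    have hx := (abs_le.1 (h₁ x)).2
    have hx0 : 0 < k x ^ (1 + 1 / p) := rpow_pos_of_pos (hpos x) _
    nlinarith
  have hI4 : (4 - 6 * ε ^ 2) * E ≤ I := by
    have h3 : 3 / π * ((∫ x in (0:ℝ)..(2 * π), k₁ x * cos x) ^ 2
        + (∫ x in (0:ℝ)..(2 * π), k₁ x * sin x) ^ 2) ≤ 6 * ε ^ 2 * E := by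
      calc _ ≤ 3 / π * (π * (ε ^ 2 * E) + π * (ε ^ 2 * E)) := by gcongr
        _ = _ := by field_simp; ring
    linarith
  rw [hsplit, hparts]
  have hfin : (2 - 13 * ε) * E ≤ (1 - ε) * I - (2 + 3 * ε) * E := by
    have h5 := mul_le_mul_of_nonneg_left hI4 (sub_nonneg.2 hε1)
    have h6 : (2 - 13 * ε) * E ≤ ((1 - ε) * (4 - 6 * ε ^ 2) - (2 + 3 * ε)) * E := by
      refine mul_le_mul_of_nonneg_right ?_ hE0
      nlinarith [mul_nonneg hε0 (sub_nonneg.2 hε1), pow_nonneg hε0 3]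
    linarith
  have := mul_le_mul_of_nonneg_left (hfin.trans (sub_le_sub hI2 hE2)) hp0.le
  linarith

/-- The derivative of a periodic function is periodic. -/
theorem periodic_of_hasDerivAt {f f' : ℝ → ℝ} {c : ℝ} (hf : Function.Periodic f c)
    (hd : ∀ x, HasDerivAt f (f' x) x) : Function.Periodic f' c := fun x =>
  ((funext hf : (fun y => f (y + c)) = f) ▸ (hd (x + c)).comp_add_const x c).unique (hd x)

/-- The partial derivative in the first variable on an open half plane. -/
theorem hasDerivAt_fst_of_contDiffOn_halfPlane {F : ℝ × ℝ → ℝ}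
    (hF : ContDiffOn ℝ (⊤ : ℕ∞) F (univ ×ˢ Ioi 0)) (x : ℝ) {t : ℝ} (ht : 0 < t) :
    HasDerivAt (fun y => F (y, t)) (fderiv ℝ F (x, t) (1, 0)) x := by
  have hd := ((hF.contDiffAt ((isOpen_univ.prod isOpen_Ioi).mem_nhds
    (show (x, t) ∈ (univ : Set ℝ) ×ˢ Ioi (0:ℝ) from ⟨mem_univ _, ht⟩))).differentiableAt
    (by simp)).hasFDerivAt
  exact hd.comp_hasDerivAt x ((hasDerivAt_id x).prodMk (hasDerivAt_const x t))

/-- The partial derivative in the second variable on an open half plane. -/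
theorem hasDerivAt_snd_of_contDiffOn_halfPlane {F : ℝ × ℝ → ℝ}
    (hF : ContDiffOn ℝ (⊤ : ℕ∞) F (univ ×ˢ Ioi 0)) (x : ℝ) {t : ℝ} (ht : 0 < t) :
    HasDerivAt (fun s => F (x, s)) (fderiv ℝ F (x, t) (0, 1)) t := by
  have hd := ((hF.contDiffAt ((isOpen_univ.prod isOpen_Ioi).mem_nhds
    (show (x, t) ∈ (univ : Set ℝ) ×ˢ Ioi (0:ℝ) from ⟨mem_univ _, ht⟩))).differentiableAt
    (by simp)).hasFDerivAt
  exact hd.comp_hasDerivAt t ((hasDerivAt_const t x).prodMk (hasDerivAt_id t))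

/-- Directional derivatives of a smooth function on an open half plane are smooth. -/
theorem contDiffOn_fderiv_apply_halfPlane {F : ℝ × ℝ → ℝ}
    (hF : ContDiffOn ℝ (⊤ : ℕ∞) F (univ ×ˢ Ioi 0)) (v : ℝ × ℝ) :
    ContDiffOn ℝ (⊤ : ℕ∞) (fun q => fderiv ℝ F q v) (univ ×ˢ Ioi 0) :=
  (hF.fderiv_of_isOpen (isOpen_univ.prod isOpen_Ioi) le_rfl).clm_apply contDiffOn_const

/-- Horizontal slices of a smooth function on an open half plane are continuous. -/
theorem continuous_slice_of_contDiffOn_halfPlane {F : ℝ × ℝ → ℝ}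
    (hF : ContDiffOn ℝ (⊤ : ℕ∞) F (univ ×ˢ Ioi 0)) {t : ℝ} (ht : 0 < t) :
    Continuous fun x => F (x, t) :=
  hF.continuousOn.comp_continuous (by fun_prop) fun _ => ⟨mem_univ _, ht⟩

/-- The mixed second partial derivatives agree. -/
theorem fderiv_fderiv_apply_comm_halfPlane {F : ℝ × ℝ → ℝ}
    (hF : ContDiffOn ℝ (⊤ : ℕ∞) F (univ ×ˢ Ioi 0)) (x : ℝ) {t : ℝ} (ht : 0 < t) (v w : ℝ × ℝ) :
    fderiv ℝ (fun q => fderiv ℝ F q v) (x, t) w = fderiv ℝ (fun q => fderiv ℝ F q w) (x, t) v := by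
  have hat : ContDiffAt ℝ (⊤ : ℕ∞) F (x, t) := hF.contDiffAt
    ((isOpen_univ.prod isOpen_Ioi).mem_nhds
      (show (x, t) ∈ (univ : Set ℝ) ×ˢ Ioi (0:ℝ) from ⟨mem_univ _, ht⟩))
  have hd : DifferentiableAt ℝ (fderiv ℝ F) (x, t) :=
    (hat.fderiv_right (m := 1) (by norm_cast)).differentiableAt (by simp)
  have hsymm : IsSymmSndFDerivAt ℝ F (x, t) := hat.isSymmSndFDerivAt
    (by rw [minSmoothness_of_isRCLikeNormedField]; norm_cast)
  have e : ∀ u z : ℝ × ℝ, fderiv ℝ (fun q => fderiv ℝ F q u) (x, t) z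
      = fderiv ℝ (fderiv ℝ F) (x, t) z u := fun u z => by
    rw [fderiv_clm_apply hd (differentiableAt_const u)]
    simp
  rw [e, e, hsymm.eq]

/-- Uniform convergence to `1` passes to real powers. -/
theorem eventually_abs_rpow_sub_one_le {K : ℝ → ℝ → ℝ}
    (hconv : TendstoUniformly (fun τ θ => K θ τ) (fun _ => 1) atTop) (r : ℝ) {ε : ℝ} (hε : 0 < ε) :
    ∀ᶠ τ in atTop, ∀ θ, |K θ τ ^ r - 1| ≤ ε := by
  have hc : ContinuousAt (fun y : ℝ => y ^ r) 1 :=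
    Real.continuousAt_rpow_const 1 r (Or.inl one_ne_zero)
  obtain ⟨δ, hδ, h⟩ := Metric.continuousAt_iff.1 hc ε hε
  filter_upwards [Metric.tendstoUniformly_iff.1 hconv δ hδ] with τ hτ θ
  have := h (x := K θ τ) (by rw [dist_comm]; exact hτ θ)
  rw [Real.one_rpow, Real.dist_eq] at this
  exact this.le

/-- The first Fourier modes of `K ^ (-1 / p)` vanish along a convergent flow: they satisfy
`M' = M` and stay bounded. -/
theorem integral_rpow_mul_eq_zero_of_flow {p : ℝ} (hp : 0 < p) {K : ℝ → ℝ → ℝ}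
    (hsmooth : ContDiffOn ℝ (⊤ : ℕ∞) (fun q : ℝ × ℝ => K q.1 q.2) (univ ×ˢ Ioi 0))
    (hper : ∀ τ : ℝ, Function.Periodic (fun θ => K θ τ) (2 * π))
    (hpos : ∀ θ τ : ℝ, 0 ≤ τ → 0 < K θ τ)
    (hpde : ∀ θ : ℝ, ∀ τ ∈ Ioi (0:ℝ),
      deriv (fun s => K θ s) τ =
        p * K θ τ ^ (1 + 1 / p) * deriv (deriv (fun x => K x τ)) θ
          + p * K θ τ ^ (2 + 1 / p) - p * K θ τ)
    (hconv : TendstoUniformly (fun τ θ => K θ τ) (fun _ => 1) atTop)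
    {φ φ' : ℝ → ℝ} (hφs : ContDiff ℝ (⊤ : ℕ∞) φ) (hφ : ∀ x, HasDerivAt φ (φ' x) x)
    (hφ' : ∀ x, HasDerivAt φ' (-φ x) x) (hφ1 : ∀ x, |φ x| ≤ 1)
    (hφper : φ (2 * π) = φ 0) (hφper' : φ' (2 * π) = φ' 0) {τ : ℝ} (hτ : 0 < τ) :
    ∫ x in (0:ℝ)..(2 * π), K x τ ^ (-1 / p) * φ x = 0 := by
  set f : ℝ × ℝ → ℝ := fun q => K q.1 q.2 with hf
  set fx : ℝ × ℝ → ℝ := fun q => fderiv ℝ f q (1, 0) with hfx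
  have hfxs := contDiffOn_fderiv_apply_halfPlane hsmooth (1, 0)
  have hfxxs := contDiffOn_fderiv_apply_halfPlane hfxs (1, 0)
  have hφc := hφs.continuous
  have hφc' : Continuous φ' := continuous_iff_continuousAt.2 fun x => (hφ' x).continuousAt
  set G : ℝ × ℝ → ℝ := fun q => f q ^ (-1 / p) * φ q.1 with hG
  have hGs : ContDiffOn ℝ (⊤ : ℕ∞) G (univ ×ˢ Ioi 0) := by
    refine ContDiffOn.mul (hsmooth.rpow_const_of_ne fun q hq => (hpos q.1 q.2 ?_).ne')
      (hφs.comp contDiff_fst).contDiffOn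
    exact le_of_lt hq.2
  have hM : ∀ t, 0 < t → HasDerivAt (fun s => ∫ x in (0:ℝ)..(2 * π), G (x, s))
      (∫ x in (0:ℝ)..(2 * π), G (x, t)) t := by
    intro t ht
    refine (hasDerivAt_integral_of_contDiffOn_halfPlane (by norm_cast) hGs
      0 (2 * π) ht).congr_deriv ?_
    have hdx := fun x => hasDerivAt_fst_of_contDiffOn_halfPlane hsmooth x ht
    have hdxx := fun x => hasDerivAt_fst_of_contDiffOn_halfPlane hfxs x ht
    have hderiv : deriv (fun x => K x t) = fun x => fx (x, t) := funext fun x => (hdx x).deriv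
    have hfc := continuous_slice_of_contDiffOn_halfPlane hsmooth ht
    have hfxc := continuous_slice_of_contDiffOn_halfPlane hfxs ht
    have hfxxc := continuous_slice_of_contDiffOn_halfPlane hfxxs ht
    have hGc := continuous_slice_of_contDiffOn_halfPlane hGs ht
    have hpt : ∀ x, fderiv ℝ G (x, t) (0, 1)
        = G (x, t) - (φ x * fderiv ℝ fx (x, t) (1, 0) + φ x * f (x, t)) := by
      intro x
      have hk := hpos x t ht.le
      have h1 := hasDerivAt_snd_of_contDiffOn_halfPlane hGs x ht
      have h2 := ((hasDerivAt_snd_of_contDiffOn_halfPlane hsmooth x ht).rpow_const (p := -1 / p)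
        (Or.inl hk.ne')).mul_const (φ x)
      rw [h1.unique h2, ← (hasDerivAt_snd_of_contDiffOn_halfPlane hsmooth x ht).deriv,
        hpde x t ht, hderiv, (hdxx x).deriv]
      simp only [hG, hf]
      have e1 : K x t ^ (1 + 1 / p) * K x t ^ (-1 / p - 1) = 1 := by
        rw [← rpow_add hk, show 1 + 1 / p + (-1 / p - 1) = 0 by ring, rpow_zero]
      have e2 : K x t ^ (2 + 1 / p) * K x t ^ (-1 / p - 1) = K x t := by
        rw [← rpow_add hk, show 2 + 1 / p + (-1 / p - 1) = 1 by ring, rpow_one]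
      have e3 : K x t ^ (-1 / p) = K x t * K x t ^ (-1 / p - 1) := by
        nth_rw 2 [← rpow_one (K x t)]
        rw [← rpow_add hk, show 1 + (-1 / p - 1) = -1 / p by ring]
      rw [e3]
      have hpp : p * (-1 / p) = -1 := by field_simp
      linear_combination (p * (-1 / p) * fderiv ℝ fx (x, t) (1, 0) * φ x) * e1
        + (p * (-1 / p) * φ x) * e2
        + (fderiv ℝ fx (x, t) (1, 0) * φ x + φ x * K x t
            - K x t * K x t ^ (-1 / p - 1) * φ x) * hpp
    have hp1 : f (2 * π, t) = f (0, t) := by simpa using hper t 0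
    have hp2 : fx (2 * π, t) = fx (0, t) := by
      simpa using periodic_of_hasDerivAt (hper t) hdx 0
    have i1 : ∫ x in (0:ℝ)..(2 * π), φ x * fderiv ℝ fx (x, t) (1, 0)
        = -∫ x in (0:ℝ)..(2 * π), φ x * f (x, t) := by
      rw [integral_mul_deriv_eq_neg_of_periodic hφ hdxx hφc' hfxxc hφper hp2,
        integral_mul_deriv_eq_neg_of_periodic hφ' hdx (by fun_prop) hfxc hφper' hp1]
      simp
    simp_rw [hpt]
    rw [intervalIntegral.integral_sub, intervalIntegral.integral_add, i1]
    · ring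
    · exact (hφc.mul hfxxc).intervalIntegrable _ _
    · exact (hφc.mul hfc).intervalIntegrable _ _
    · exact hGc.intervalIntegrable _ _
    · exact ((hφc.mul hfxxc).add (hφc.mul hfc)).intervalIntegrable _ _
  set M : ℝ → ℝ := fun s => ∫ x in (0:ℝ)..(2 * π), G (x, s) with hMdef
  have hg : ∀ t, 0 < t → HasDerivAt (fun s => M s * exp (-s)) 0 t := by
    intro t ht
    refine ((hM t ht).mul (hasDerivAt_neg t).exp).congr_deriv ?_
    simp only [hMdef]
    ring
  have hconst : ∀ t, 0 < t → M t * exp (-t) = M τ * exp (-τ) := fun t ht =>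
    isOpen_Ioi.is_const_of_deriv_eq_zero isPreconnected_Ioi
      (fun s hs => (hg s hs).differentiableAt.differentiableWithinAt) (fun s hs => (hg s hs).deriv)
      ht hτ
  have hbound : ∀ᶠ t in atTop, |M t| ≤ 2 * |2 * π - 0| := by
    filter_upwards [eventually_abs_rpow_sub_one_le hconv (-1 / p) one_pos] with t ht
    refine intervalIntegral.norm_integral_le_of_norm_le_const (f := fun x => G (x, t))
      fun x _ => ?_
    have h3 : |K x t ^ (-1 / p)| ≤ 2 := by
      have := abs_le.1 (ht x)
      exact abs_le.2 ⟨by linarith, by linarith⟩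
    rw [norm_eq_abs, hG, abs_mul]
    exact (mul_le_mul h3 (hφ1 x) (abs_nonneg _) (by norm_num)).trans (by norm_num)
  have hlim : Tendsto (fun t => M t * exp (-t)) atTop (nhds 0) :=
    bdd_le_mul_tendsto_zero' _ hbound tendsto_exp_neg_atTop_nhds_zero
  have hlim' : Tendsto (fun t => M t * exp (-t)) atTop (nhds (M τ * exp (-τ))) :=
    tendsto_const_nhds.congr' <| by
      filter_upwards [eventually_gt_atTop 0] with t ht
      exact (hconst t ht).symm
  exact (mul_eq_zero.1 (tendsto_nhds_unique hlim' hlim)).resolve_right (exp_pos _).ne'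

/-- A differential inequality `E' ≤ -c E` gives exponential decay. -/
theorem mul_exp_le_of_hasDerivAt_le {E E' : ℝ → ℝ} {c T : ℝ}
    (hE : ∀ t, T ≤ t → HasDerivAt E (E' t) t) (hle : ∀ t, T ≤ t → E' t ≤ -c * E t) {t : ℝ}
    (ht : T ≤ t) : E t * exp (c * t) ≤ E T * exp (c * T) := by
  have hd : ∀ s, T ≤ s →
      HasDerivAt (fun s => E s * exp (c * s)) ((E' s + c * E s) * exp (c * s)) s := fun s hs => by
    refine ((hE s hs).mul ((hasDerivAt_id s).const_mul c).exp).congr_deriv ?_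
    simp only [id]
    ring
  refine antitoneOn_of_deriv_nonpos (convex_Ici T)
    (fun s hs => (hd s hs).continuousAt.continuousWithinAt)
    (fun s hs => (hd s (interior_subset hs)).differentiableAt.differentiableWithinAt)
    (fun s hs => ?_) self_mem_Ici ht ht
  rw [(hd s (interior_subset hs)).deriv]
  have := hle s (interior_subset hs)
  exact mul_nonpos_of_nonpos_of_nonneg (by linarith) (exp_pos _).le

/-- The angular derivative is bounded on compact time intervals, up to the initial time. -/
theorem exists_bound_deriv_fst {K : ℝ → ℝ → ℝ}
    (hsmooth : ContDiffOn ℝ (⊤ : ℕ∞) (fun q : ℝ × ℝ => K q.1 q.2) (univ ×ˢ Ici 0)) (a b T : ℝ) :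
    ∃ B, ∀ τ ∈ Icc 0 T, ∀ θ ∈ Icc a b, |deriv (fun x => K x τ) θ| ≤ B := by
  have hu : UniqueDiffOn ℝ ((univ : Set ℝ) ×ˢ Ici (0:ℝ)) :=
    uniqueDiffOn_univ.prod (uniqueDiffOn_Ici 0)
  have hc : ContinuousOn (fun q => fderivWithin ℝ (fun q : ℝ × ℝ => K q.1 q.2)
      (univ ×ˢ Ici 0) q (1, 0)) (univ ×ˢ Ici 0) :=
    (hsmooth.continuousOn_fderivWithin hu (by simp)).clm_apply continuousOn_const
  obtain ⟨B, hB⟩ := ((isCompact_Icc (a := a) (b := b)).prod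
    (isCompact_Icc (a := (0:ℝ)) (b := T))).exists_bound_of_continuousOn
    (hc.mono fun q hq => ⟨mem_univ _, hq.2.1⟩)
  refine ⟨B, fun τ hτ θ hθ => ?_⟩
  have hmem : (θ, τ) ∈ (univ : Set ℝ) ×ˢ Ici (0:ℝ) := ⟨mem_univ _, hτ.1⟩
  have hd := ((hsmooth (θ, τ) hmem).differentiableWithinAt (by simp)).hasFDerivWithinAt
  have hline : HasDerivAt (fun x : ℝ => (x, τ)) (1, 0) θ :=
    (hasDerivAt_id θ).prodMk (hasDerivAt_const θ τ)
  have hd' := hd.comp_hasDerivAt (f := fun x : ℝ => (x, τ)) θ hline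
    (Eventually.of_forall fun x => ⟨mem_univ x, hτ.1⟩)
  exact hd'.deriv ▸ hB (θ, τ) ⟨hθ, hτ⟩

/-- The time derivative of the Dirichlet energy on an open half plane. -/
theorem hasDerivAt_dirichlet {f : ℝ × ℝ → ℝ}
    (hf : ContDiffOn ℝ (⊤ : ℕ∞) f (univ ×ˢ Ioi 0))
    (hper : ∀ τ : ℝ, Function.Periodic (fun θ => f (θ, τ)) (2 * π)) {τ : ℝ} (hτ : 0 < τ) :
    HasDerivAt (fun s => ∫ x in (0:ℝ)..(2 * π), (fderiv ℝ f (x, s) (1, 0)) ^ 2)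
      (-2 * ∫ x in (0:ℝ)..(2 * π),
        fderiv ℝ (fun q => fderiv ℝ f q (1, 0)) (x, τ) (1, 0) * fderiv ℝ f (x, τ) (0, 1)) τ := by
  set fx : ℝ × ℝ → ℝ := fun q => fderiv ℝ f q (1, 0) with hfx
  set ft : ℝ × ℝ → ℝ := fun q => fderiv ℝ f q (0, 1) with hft
  have hfxs : ContDiffOn ℝ (⊤ : ℕ∞) fx (univ ×ˢ Ioi 0) :=
    contDiffOn_fderiv_apply_halfPlane hf (1, 0)
  have hfts : ContDiffOn ℝ (⊤ : ℕ∞) ft (univ ×ˢ Ioi 0) :=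
    contDiffOn_fderiv_apply_halfPlane hf (0, 1)
  have hdx := fun x => hasDerivAt_fst_of_contDiffOn_halfPlane hf x hτ
  have hdxx := fun x => hasDerivAt_fst_of_contDiffOn_halfPlane hfxs x hτ
  have hdtx := fun x => hasDerivAt_fst_of_contDiffOn_halfPlane hfts x hτ
  have hsq : ContDiffOn ℝ (⊤ : ℕ∞) (fun q => fx q ^ 2) (univ ×ˢ Ioi 0) := hfxs.pow 2
  refine (hasDerivAt_integral_of_contDiffOn_halfPlane (by norm_cast) hsq
    0 (2 * π) hτ).congr_deriv ?_
  have hpt : ∀ x, fderiv ℝ (fun q => fx q ^ 2) (x, τ) (0, 1)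
      = 2 * (fx (x, τ) * fderiv ℝ ft (x, τ) (1, 0)) := by
    intro x
    have h1 := hasDerivAt_snd_of_contDiffOn_halfPlane hsq x hτ
    have h2 := (hasDerivAt_snd_of_contDiffOn_halfPlane hfxs x hτ).pow 2
    rw [h1.unique h2, fderiv_fderiv_apply_comm_halfPlane hf x hτ (1, 0) (0, 1)]
    push_cast
    ring
  have hp1 : fx (2 * π, τ) = fx (0, τ) := by
    simpa using periodic_of_hasDerivAt (hper τ) hdx 0
  have hp2 : ft (2 * π, τ) = ft (0, τ) := by
    refine (hasDerivAt_snd_of_contDiffOn_halfPlane hf (2 * π) hτ).unique ?_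
    have : (fun s => f (2 * π, s)) = fun s => f (0, s) := funext fun s => by
      simpa using hper s 0
    rw [this]
    exact hasDerivAt_snd_of_contDiffOn_halfPlane hf 0 hτ
  simp_rw [hpt]
  rw [intervalIntegral.integral_const_mul, integral_mul_deriv_eq_neg_of_periodic hdxx hdtx
    (continuous_slice_of_contDiffOn_halfPlane (contDiffOn_fderiv_apply_halfPlane hfxs (1, 0)) hτ)
    (continuous_slice_of_contDiffOn_halfPlane (contDiffOn_fderiv_apply_halfPlane hfts (1, 0)) hτ)
    hp1 hp2]
  ring

/-- Exponential decay of the `L²` norm of the first angular derivative of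
the normalized curvature. -/
theorem first_derivative_L2_decay
    (p : ℝ) (hp : 1 ≤ p) (K : ℝ → ℝ → ℝ)
    (hsmooth : ContDiffOn ℝ (⊤ : ℕ∞) (fun q : ℝ × ℝ => K q.1 q.2) (univ ×ˢ Ici 0))
    (hper : ∀ τ : ℝ, Function.Periodic (fun θ => K θ τ) (2 * π))
    (hpos : ∀ θ τ : ℝ, 0 ≤ τ → 0 < K θ τ)
    (hpde : ∀ θ : ℝ, ∀ τ ∈ Ioi (0:ℝ),
      deriv (fun s => K θ s) τ =
        p * K θ τ ^ (1 + 1 / p) * deriv (deriv (fun x => K x τ)) θ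
          + p * K θ τ ^ (2 + 1 / p) - p * K θ τ)
    (hconv : TendstoUniformly (fun τ θ => K θ τ) (fun _ => 1) atTop) :
    ∀ α : ℝ, 0 < α → α < 1 → ∃ C : ℝ, 0 < C ∧ ∀ τ : ℝ, 0 ≤ τ →
      (∫ θ in (0:ℝ)..(2 * π), (deriv (fun x => K x τ) θ) ^ 2) ^ ((1:ℝ) / 2) ≤
        C * Real.exp (-2 * α * p * τ) := by
  intro α hα0 hα1
  have hp0 : 0 < p := by linarith
  set S : Set (ℝ × ℝ) := univ ×ˢ Ioi 0 with hS
  set f : ℝ × ℝ → ℝ := fun q => K q.1 q.2 with hf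
  have hfs : ContDiffOn ℝ (⊤ : ℕ∞) f S := hsmooth.mono (prod_mono_right Ioi_subset_Ici_self)
  have hfxs := contDiffOn_fderiv_apply_halfPlane hfs (1, 0)
  have hdx : ∀ τ : ℝ, 0 < τ → deriv (fun x => K x τ) = fun θ => fderiv ℝ f (θ, τ) (1, 0) :=
    fun τ hτ => funext fun θ => (hasDerivAt_fst_of_contDiffOn_halfPlane hfs θ hτ).deriv
  have hpde' : ∀ τ : ℝ, 0 < τ → ∀ θ, fderiv ℝ f (θ, τ) (0, 1)
      = p * K θ τ ^ (1 + 1 / p) * fderiv ℝ (fun q => fderiv ℝ f q (1, 0)) (θ, τ) (1, 0)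
        + p * K θ τ ^ (2 + 1 / p) - p * K θ τ := fun τ hτ θ => by
    rw [← (hasDerivAt_snd_of_contDiffOn_halfPlane hfs θ hτ).deriv, hpde θ τ hτ, hdx τ hτ,
      (hasDerivAt_fst_of_contDiffOn_halfPlane hfxs θ hτ).deriv]
  have hcos := fun τ hτ => integral_rpow_mul_eq_zero_of_flow hp0 hfs hper hpos hpde hconv
    contDiff_cos (φ' := fun x => -sin x) hasDerivAt_cos (fun x => (hasDerivAt_sin x).neg)
    abs_cos_le_one (by simp) (by simp) (τ := τ) hτ
  have hsin := fun τ hτ => integral_rpow_mul_eq_zero_of_flow hp0 hfs hper hpos hpde hconv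
    contDiff_sin hasDerivAt_sin hasDerivAt_cos abs_sin_le_one (by simp) (by simp) (τ := τ) hτ
  set ε := (1 - α) / 7 with hε
  have hε0 : 0 < ε := by rw [hε]; linarith
  obtain ⟨T, hT⟩ := eventually_atTop.1 ((eventually_gt_atTop (0:ℝ)).and
    ((eventually_abs_rpow_sub_one_le hconv (1 + 1 / p) hε0).and
      (eventually_abs_rpow_sub_one_le hconv (-1 / p - 1) hε0)))
  have hT0 : 0 < T := (hT T le_rfl).1
  set E : ℝ → ℝ := fun τ => ∫ θ in (0:ℝ)..(2 * π), (deriv (fun x => K x τ) θ) ^ 2 with hE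
  set E' : ℝ → ℝ := fun τ => -2 * ∫ x in (0:ℝ)..(2 * π),
    fderiv ℝ (fun q => fderiv ℝ f q (1, 0)) (x, τ) (1, 0) * fderiv ℝ f (x, τ) (0, 1) with hE'
  have hEd : ∀ τ, T ≤ τ → HasDerivAt E (E' τ) τ := fun τ hτ => by
    have hτ0 := hT0.trans_le hτ
    refine (hasDerivAt_dirichlet hfs hper hτ0).congr_of_eventuallyEq ?_
    filter_upwards [lt_mem_nhds hτ0] with s hs
    simp only [hE, hdx s hs]
  have hEle : ∀ τ, T ≤ τ → E' τ ≤ -(4 * α * p) * E τ := fun τ hτ => by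
    obtain ⟨hτ0, h₁, h₂⟩ := hT τ hτ
    have hd := fun x => hasDerivAt_fst_of_contDiffOn_halfPlane hfs x hτ0
    have := dirichlet_dissipation hp hε0.le (by rw [hε]; linarith) hd
      (fun x => hasDerivAt_fst_of_contDiffOn_halfPlane hfxs x hτ0)
      (continuous_slice_of_contDiffOn_halfPlane (contDiffOn_fderiv_apply_halfPlane hfxs (1, 0)) hτ0)
      (by simpa using hper τ 0) (by simpa using periodic_of_hasDerivAt (hper τ) hd 0)
      (fun x => hpos x τ hτ0.le) h₁ h₂ (hcos τ hτ0) (hsin τ hτ0)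
    have hE0 : 0 ≤ E τ := intervalIntegral.integral_nonneg two_pi_pos.le fun x _ => sq_nonneg _
    have hEe : E τ = ∫ x in (0:ℝ)..(2 * π), (fderiv ℝ f (x, τ) (1, 0)) ^ 2 := by
      simp only [hE, hdx τ hτ0]
    rw [← hEe] at this
    simp only [hE', hpde' τ hτ0]
    have h3 : 2 * α * (p * E τ) ≤ (2 - 13 * ε) * (p * E τ) :=
      mul_le_mul_of_nonneg_right (by rw [hε]; linarith) (by positivity)
    linarith
  obtain ⟨B, hB⟩ := exists_bound_deriv_fst hsmooth 0 (2 * π) T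
  have hEB : ∀ τ ∈ Icc 0 T, E τ ≤ B ^ 2 * (2 * π) := fun τ hτ => by
    have := intervalIntegral.norm_integral_le_of_norm_le_const (a := (0:ℝ)) (b := 2 * π)
      (f := fun θ => (deriv (fun x => K x τ) θ) ^ 2) (C := B ^ 2) fun θ hθ => by
        rw [uIoc_of_le two_pi_pos.le] at hθ
        rw [norm_pow, norm_eq_abs]
        exact pow_le_pow_left₀ (abs_nonneg _) (hB τ hτ θ (Ioc_subset_Icc_self hθ)) 2
    rw [sub_zero, abs_of_pos two_pi_pos] at this
    exact (le_abs_self _).trans this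
  set D := B ^ 2 * (2 * π) * exp (4 * α * p * T) + 1 with hD
  have hD0 : 0 < D := by positivity
  have hmain : ∀ τ, 0 ≤ τ → E τ * exp (4 * α * p * τ) ≤ D := fun τ hτ => by
    have hsmall : ∀ s ∈ Icc 0 T, E s * exp (4 * α * p * s) ≤ D := fun s hs => by
      have h4 : exp (4 * α * p * s) ≤ exp (4 * α * p * T) :=
        exp_le_exp.2 (mul_le_mul_of_nonneg_left hs.2 (by positivity))
      have := mul_le_mul (hEB s hs) h4 (exp_pos _).le (by positivity)
      linarith
    rcases le_total τ T with h | h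
    · exact hsmall τ ⟨hτ, h⟩
    · exact (mul_exp_le_of_hasDerivAt_le hEd hEle h).trans (hsmall T ⟨hT0.le, le_rfl⟩)
  refine ⟨√D, sqrt_pos.2 hD0, fun τ hτ => ?_⟩
  rw [← sqrt_eq_rpow]
  refine sqrt_le_iff.2 ⟨by positivity, ?_⟩
  rw [mul_pow, sq_sqrt hD0.le, ← exp_nat_mul]
  have h5 : ((2:ℕ):ℝ) * (-2 * α * p * τ) = -(4 * α * p * τ) := by push_cast; ring
  rw [h5, exp_neg, ← div_eq_mul_inv, le_div_iff₀ (exp_pos _)]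
  exact hmain τ hτ
end
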